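/- Let α be a strongly continuous one-parameter isometric representation on a Banach space E, z ∈ ℂ, and C a subspace of D(α_z) such that C is dense in E and α_t(C) ⊆ C for every t ∈ ℝ. Then C is a core for α_z. -/

import Mathlib

open Complex MeasureTheory Filter Topology Set

noncomputable section

/-- The closed horizontal strip between the real axis and the line `Im = z.im`. -/
def hStrip (z : ℂ) : Set ℂ := {y : ℂ | y.im ∈ Set.uIcc 0 z.im}

/-- A strongly continuous one-parameter (contractive, hence isometric) representation. -/
structure IsOneParamRep {E : Type*} [NormedAddCommGroup E] [NormedSpace ℂ E]
    (α : ℝ → E →L[ℂ] E) : Prop where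
  map_add : ∀ s t : ℝ, α (s + t) = (α s).comp (α t)
  map_zero : α 0 = ContinuousLinearMap.id ℂ E
  norm_le : ∀ t : ℝ, ‖α t‖ ≤ 1
  strong_cont : ∀ a : E, Continuous fun t : ℝ => α t a

/-- `(a, b)` lies in the graph of the analytic continuation `α_z`:  there is a function `f`,
continuous on the strip `S(z)`, analytic in its interior, agreeing with `t ↦ α_t a` on `ℝ`,
with `f z = b`. -/
def HasContVal {E : Type*} [NormedAddCommGroup E] [NormedSpace ℂ E]
    (α : ℝ → E →L[ℂ] E) (z : ℂ) (a b : E) : Prop :=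
  ∃ f : ℂ → E, ContinuousOn f (hStrip z) ∧
    DifferentiableOn ℂ f (interior (hStrip z)) ∧
    (∀ t : ℝ, f t = α t a) ∧ f z = b


/-!
Averaging against a Gaussian, `S_w x = ∫ exp (-π (t - w) ^ 2) • α_t x dt`, makes every vector
entire: `w ↦ S_w x` is an entire extension of `t ↦ S_0 (α_t x)`. Uniqueness of analytic extensions
then gives `S_0 (α_z x) = S_z x` on the domain of `α_z`, where `S_z` is *bounded*. Since `C` is
invariant, for `x ∈ C` the point `(S_0 x, S_z x)` is an average of the points `(α_t x, α_t (α_z x))`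
of the graph of `α_z` over `C`, hence lies in its closure; as `C` is dense and `S_0`, `S_z` are
bounded, this persists for all `x`. For `(a, b)` in the graph of `α_z` it says that `(S_0 a, S_0 b)`
lies in that closure. Replacing `α_t` by `α_{εt}` and `z` by `z / ε` does not change the graph, and
`ε → 0` turns `(S_0 a, S_0 b)` into `(a, b)`.
-/

section HolomorphicOnStrip

/-- If every frontier point of `U` has a zero of `f` among its multiples by powers of `c`, then the
product of the corresponding dilates of `f` vanishes on the frontier, hence on `U`. -/
lemma map_zero_eq_zero_of_frontier {U : Set ℂ} (hU : Bornology.IsBounded U) (hU0 : 0 ∈ closure U)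
    {c : ℂ} (hc : MapsTo (c * ·) U U) {f : ℂ → ℂ} (hf : DiffContOnCl ℂ f U) {n : ℕ}
    (hzero : ∀ w ∈ frontier U, ∃ k < n, f (c ^ k * w) = 0) : f 0 = 0 := by
  have hpow : ∀ k, MapsTo (c ^ k * ·) U U := fun k => by
    simpa only [mul_left_iterate] using hc.iterate k
  have hprod : ∀ m, DiffContOnCl ℂ (fun w => ∏ k ∈ Finset.range m, f (c ^ k * w)) U := by
    intro m
    induction m with
    | zero => simpa only [Finset.range_zero, Finset.prod_empty] using diffContOnCl_const
    | succ m ih =>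
      simp only [Finset.prod_range_succ]
      exact ih.smul (hf.comp (Differentiable.diffContOnCl (by fun_prop)) (hpow m))
  have hle := norm_le_of_forall_mem_frontier_norm_le hU (hprod n) (C := 0) (fun w hw => by
    obtain ⟨k, hk, hfk⟩ := hzero w hw
    rw [Finset.prod_eq_zero (Finset.mem_range.2 hk) hfk, norm_zero]) hU0
  simp only [mul_zero, Finset.prod_const, Finset.card_range, norm_le_zero_iff] at hle
  exact eq_zero_of_pow_eq_zero hle

lemma map_zero_eq_zero_of_side_of_square {r s : ℝ} (hr : 0 < r) (hs : |s| = r) {f : ℂ → ℂ}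
    (hf : DiffContOnCl ℂ f (Ioo (-r) r ×ℂ Ioo (-r) r)) (hside : ∀ w : ℂ, w.im = s → f w = 0) :
    f 0 = 0 := by
  refine map_zero_eq_zero_of_frontier (c := I) (n := 4)
    ((Metric.isBounded_Ioo (-r) r).reProdIm (Metric.isBounded_Ioo (-r) r))
    (subset_closure (by simp [mem_reProdIm, hr])) ?_ hf ?_
  · intro w hw
    simp only [mem_reProdIm, mem_Ioo, I_mul_re, I_mul_im] at hw ⊢
    grind
  · intro w hw
    rw [frontier_reProdIm, frontier_Ioo (neg_lt_self hr)] at hw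
    have hrot : w.im = s ∨ w.re = s ∨ -w.im = s ∨ -w.re = s := by
      simp only [mem_union, mem_reProdIm, mem_insert_iff, mem_singleton_iff] at hw
      grind
    rcases hrot with h | h | h | h
    · exact ⟨0, by norm_num, hside _ (by simpa using h)⟩
    · exact ⟨1, by norm_num, hside _ (by simpa using h)⟩
    · exact ⟨2, by norm_num, hside _ (by simpa using h)⟩
    · exact ⟨3, by norm_num, hside _ (by simpa [I_pow_three] using h)⟩

variable {a b : ℝ}

/-- The point `2 * p.im - a` is the reflection of `a` in `p.im`, so the hypothesis says that the
square centred at `p` with a side on the line `Im = a` lies in the strip. -/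
lemma eq_zero_of_two_mul_im_sub_mem {f : ℂ → ℂ} (hf : DiffContOnCl ℂ f (im ⁻¹' uIoo a b))
    (hline : ∀ w : ℂ, w.im = a → f w = 0) {p : ℂ} (hp : 2 * p.im - a ∈ uIoo a b) : f p = 0 := by
  have hpa : p.im - a ≠ 0 := by
    intro h
    refine left_notMem_uIoo (a := a) (b := b) ?_
    convert hp using 1
    linarith
  have hsquare : DiffContOnCl ℂ (fun w => f (p + w))
      (Ioo (-|p.im - a|) |p.im - a| ×ℂ Ioo (-|p.im - a|) |p.im - a|) := by
    refine hf.comp (g := fun w => p + w) (Differentiable.diffContOnCl (by fun_prop)) ?_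
    intro w hw
    simp only [uIoo, mem_preimage, add_im, mem_reProdIm, mem_Ioo] at hw hp ⊢
    grind
  simpa using map_zero_eq_zero_of_side_of_square (abs_pos.2 hpa) (abs_sub_comm a p.im) hsquare
    fun w hw => hline _ (by simp [hw])

lemma eqOn_zero_strip_of_eq_zero_on_line {f : ℂ → ℂ} (hf : DiffContOnCl ℂ f (im ⁻¹' uIoo a b))
    (hline : ∀ w : ℂ, w.im = a → f w = 0) : EqOn f 0 (im ⁻¹' uIoo a b) := by
  rcases eq_or_ne a b with rfl | hab
  · simp
  obtain ⟨y, hy⟩ := nonempty_uIoo.2 hab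
  set p : ℂ := ((a + y) / 2 : ℝ) * I
  have hreflect : 2 * p.im - a = y := by
    simp only [p, mul_I_im, ofReal_re]
    ring
  have hp : p ∈ im ⁻¹' uIoo a b := by
    simp only [uIoo, mem_preimage, mem_Ioo] at hy ⊢
    grind
  have hnear : f =ᶠ[𝓝 p] 0 := by
    have hcont : ContinuousAt (fun q : ℂ => 2 * q.im - a) p := by fun_prop
    filter_upwards [hcont.preimage_mem_nhds (isOpen_Ioo.mem_nhds (hreflect.symm ▸ hy))] with q hq
    exact eq_zero_of_two_mul_im_sub_mem hf hline hq
  have hanalytic : AnalyticOnNhd ℂ f (im ⁻¹' uIoo a b) :=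
    hf.differentiableOn.analyticOnNhd (isOpen_Ioo.preimage continuous_im)
  exact hanalytic.eqOn_zero_of_preconnected_of_eventuallyEq_zero
    ((convex_Ioo _ _).linear_preimage imLm).isPreconnected hp hnear

variable {E : Type*} [NormedAddCommGroup E] [NormedSpace ℂ E] {f : ℂ → E}

lemma eqOn_zero_closedStrip_of_eq_zero_on_line (hf : DiffContOnCl ℂ f (im ⁻¹' uIoo a b))
    (hline : ∀ w : ℂ, w.im = a → f w = 0) : EqOn f 0 (im ⁻¹' uIcc a b) := by
  rcases eq_or_ne a b with rfl | hab
  · exact fun w hw => hline w (by simpa using hw)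
  have hopen : EqOn f 0 (im ⁻¹' uIoo a b) := fun w hw =>
    SeparatingDual.eq_zero_of_forall_dual_eq_zero (R := ℂ) fun φ =>
      eqOn_zero_strip_of_eq_zero_on_line (φ.differentiable.comp_diffContOnCl hf)
        (fun w hw => by rw [Function.comp_apply, hline w hw, map_zero]) hw
  have hclosure : closure (im ⁻¹' uIoo a b) = im ⁻¹' uIcc a b := by
    rw [closure_preimage_im, closure_uIoo hab]
  rw [← hclosure]
  exact hopen.of_subset_closure hf.continuousOn continuousOn_const subset_closure subset_rfl

lemma norm_le_on_closedStrip_of_bounded (hf : DiffContOnCl ℂ f (im ⁻¹' uIoo a b)) {M C : ℝ}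
    (hM : ∀ w ∈ im ⁻¹' uIoo a b, ‖f w‖ ≤ M) (ha : ∀ w : ℂ, w.im = a → ‖f w‖ ≤ C)
    (hb : ∀ w : ℂ, w.im = b → ‖f w‖ ≤ C) {w : ℂ} (hw : w ∈ im ⁻¹' uIcc a b) : ‖f w‖ ≤ C := by
  rcases eq_or_ne a b with rfl | hab
  · exact ha w (by simpa using hw)
  wlog h : a < b generalizing a b
  · rw [uIoo_comm] at hf hM
    rw [uIcc_comm] at hw
    exact this hf hM hb ha hw hab.symm (hab.lt_or_gt.resolve_left h)
  rw [uIoo_of_lt h] at hf hM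
  rw [mem_preimage, uIcc_of_lt h] at hw
  refine PhragmenLindelof.horizontal_strip hf
    ⟨0, div_pos Real.pi_pos (sub_pos.2 h), 0, .of_bound M ?_⟩ ha hb hw.1 hw.2
  refine mem_inf_of_right (mem_principal.2 fun v hv => ?_)
  simpa using hM v hv

end HolomorphicOnStrip

section StripExtension

variable {E : Type*} [NormedAddCommGroup E] [NormedSpace ℂ E]

lemma interior_hStrip (z : ℂ) : interior (hStrip z) = im ⁻¹' uIoo 0 z.im := by
  rw [show hStrip z = im ⁻¹' Icc (min 0 z.im) (max 0 z.im) from rfl, interior_preimage_im,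
    interior_Icc, Ioo_min_max]

lemma isClosed_hStrip (z : ℂ) : IsClosed (hStrip z) :=
  isClosed_Icc.preimage continuous_im

lemma hStrip_div_ofReal (z : ℂ) {c : ℝ} (hc : c ≠ 0) :
    hStrip (z / c) = (fun w : ℂ => c * w) ⁻¹' hStrip z := by
  ext w
  change w.im ∈ uIcc 0 (z / c).im ↔ (c * w).im ∈ uIcc 0 z.im
  rw [div_ofReal_im, im_ofReal_mul, ← mem_preimage (f := (c * ·)), preimage_const_mul_uIcc hc,
    zero_div]

lemma interior_hStrip_div_ofReal (z : ℂ) {c : ℝ} (hc : c ≠ 0) :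
    interior (hStrip (z / c)) = (fun w : ℂ => c * w) ⁻¹' interior (hStrip z) := by
  rw [hStrip_div_ofReal z hc]
  exact ((Homeomorph.mulLeft₀ (c : ℂ) (ofReal_ne_zero.2 hc)).preimage_interior _).symm

lemma ofReal_mem_hStrip (z : ℂ) (t : ℝ) : (t : ℂ) ∈ hStrip z := by
  simp [hStrip]

lemma self_mem_hStrip (z : ℂ) : z ∈ hStrip z := by
  simp [hStrip]

/-- The function `f` extends `u : ℝ → E` to the closed strip between `ℝ` and `Im = z.im`,
continuously there and holomorphically inside. For `u t = α_t a` these are the functions witnessing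
that `a` lies in the domain of `α_z`. -/
structure IsStripExtension (z : ℂ) (u : ℝ → E) (f : ℂ → E) : Prop where
  continuousOn : ContinuousOn f (hStrip z)
  differentiableOn : DifferentiableOn ℂ f (interior (hStrip z))
  apply_ofReal : ∀ t : ℝ, f t = u t

lemma hasContVal_iff_exists_isStripExtension {α : ℝ → E →L[ℂ] E} {z : ℂ} {a b : E} :
    HasContVal α z a b ↔ ∃ f, IsStripExtension z (fun t => α t a) f ∧ f z = b :=
  ⟨fun ⟨f, hc, hd, hu, hb⟩ => ⟨f, ⟨hc, hd, hu⟩, hb⟩,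
    fun ⟨f, ⟨hc, hd, hu⟩, hb⟩ => ⟨f, hc, hd, hu, hb⟩⟩

namespace IsStripExtension

variable {z : ℂ} {u v : ℝ → E} {f g : ℂ → E}

lemma of_differentiable (hf : Differentiable ℂ f) : IsStripExtension z (fun t => f t) f :=
  ⟨hf.continuous.continuousOn, hf.differentiableOn, fun _ => rfl⟩

lemma add (hf : IsStripExtension z u f) (hg : IsStripExtension z v g) :
    IsStripExtension z (u + v) (f + g) :=
  ⟨hf.continuousOn.add hg.continuousOn, hf.differentiableOn.add hg.differentiableOn,
    fun t => by simp [hf.apply_ofReal, hg.apply_ofReal]⟩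

lemma sub (hf : IsStripExtension z u f) (hg : IsStripExtension z v g) :
    IsStripExtension z (u - v) (f - g) :=
  ⟨hf.continuousOn.sub hg.continuousOn, hf.differentiableOn.sub hg.differentiableOn,
    fun t => by simp [hf.apply_ofReal, hg.apply_ofReal]⟩

lemma clm_comp {F : Type*} [NormedAddCommGroup F] [NormedSpace ℂ F] (T : E →L[ℂ] F)
    (hf : IsStripExtension z u f) : IsStripExtension z (fun t => T (u t)) (fun w => T (f w)) :=
  ⟨T.continuous.comp_continuousOn hf.continuousOn,
    T.differentiable.comp_differentiableOn hf.differentiableOn, fun t => by rw [hf.apply_ofReal]⟩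

lemma comp_add_ofReal (hf : IsStripExtension z u f) (s : ℝ) :
    IsStripExtension z (fun t => u (t + s)) (fun w => f (w + s)) where
  continuousOn := hf.continuousOn.comp (by fun_prop) fun w hw => by simpa [hStrip] using hw
  differentiableOn := hf.differentiableOn.comp (by fun_prop) fun w hw => by
    simpa [interior_hStrip] using hw
  apply_ofReal t := by rw [← ofReal_add, hf.apply_ofReal]

lemma comp_ofReal_mul (hf : IsStripExtension z u f) {c : ℝ} (hc : c ≠ 0) :
    IsStripExtension (z / c) (fun t => u (c * t)) (fun w => f (c * w)) where
  continuousOn := hf.continuousOn.comp (by fun_prop) (hStrip_div_ofReal z hc).subset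
  differentiableOn := hf.differentiableOn.comp (by fun_prop)
    (interior_hStrip_div_ofReal z hc).subset
  apply_ofReal t := by rw [← ofReal_mul, hf.apply_ofReal]

lemma of_tendstoUniformlyOn [CompleteSpace E] {ι : Type*} {l : Filter ι} [l.NeBot]
    {u : ι → ℝ → E} {f : ι → ℂ → E} (hf : ∀ i, IsStripExtension z (u i) (f i))
    (hg : TendstoUniformlyOn f g l (hStrip z)) (hv : ∀ t, Tendsto (u · t) l (𝓝 (v t))) :
    IsStripExtension z v g where
  continuousOn := hg.continuousOn (.of_forall fun i => (hf i).continuousOn)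
  differentiableOn := (hg.mono interior_subset).tendstoLocallyUniformlyOn.differentiableOn
    (.of_forall fun i => (hf i).differentiableOn) isOpen_interior
  apply_ofReal t := tendsto_nhds_unique (hg.tendsto_at (ofReal_mem_hStrip z t)) <| by
    simpa only [(hf _).apply_ofReal] using hv t

lemma diffContOnCl (hf : IsStripExtension z u f) : DiffContOnCl ℂ f (im ⁻¹' uIoo 0 z.im) := by
  rw [← interior_hStrip]
  exact ⟨hf.differentiableOn,
    hf.continuousOn.mono (closure_minimal interior_subset (isClosed_hStrip z))⟩

lemma eqOn (hf : IsStripExtension z u f) (hg : IsStripExtension z u g) :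
    EqOn f g (hStrip z) := by
  have hzero : EqOn (f - g) 0 (hStrip z) :=
    eqOn_zero_closedStrip_of_eq_zero_on_line (hf.sub hg).diffContOnCl fun w hw => by
      rw [show w = (w.re : ℂ) from Complex.ext rfl hw, (hf.sub hg).apply_ofReal, sub_self,
        Pi.zero_apply]
  exact fun w hw => sub_eq_zero.1 (hzero hw)

end IsStripExtension

end StripExtension

section Graph

variable {E : Type*} [NormedAddCommGroup E] [NormedSpace ℂ E] {α : ℝ → E →L[ℂ] E} {z : ℂ}

namespace IsOneParamRep

lemma norm_apply_le (hα : IsOneParamRep α) (t : ℝ) (x : E) : ‖α t x‖ ≤ ‖x‖ :=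
  ((α t).le_of_opNorm_le (hα.norm_le t) x).trans_eq (one_mul _)

lemma apply_apply (hα : IsOneParamRep α) (s t : ℝ) (x : E) : α s (α t x) = α (s + t) x := by
  rw [hα.map_add, ContinuousLinearMap.comp_apply]

lemma apply_comm (hα : IsOneParamRep α) (s t : ℝ) (x : E) : α s (α t x) = α t (α s x) := by
  rw [hα.apply_apply, hα.apply_apply, add_comm]

variable {a : E} {f : ℂ → E}

lemma stripExtension_add_ofReal (hα : IsOneParamRep α)
    (hf : IsStripExtension z (fun t => α t a) f) (s : ℝ) {w : ℂ} (hw : w ∈ hStrip z) :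
    f (w + s) = α s (f w) := by
  have hcomp : IsStripExtension z (fun t => α (t + s) a) (fun w => α s (f w)) := by
    simpa only [hα.apply_apply, add_comm] using hf.clm_comp (α s)
  exact (hf.comp_add_ofReal s).eqOn hcomp hw

lemma norm_stripExtension_le_of_im_eq (hα : IsOneParamRep α)
    (hf : IsStripExtension z (fun t => α t a) f) {v w : ℂ} (hv : v ∈ hStrip z)
    (him : w.im = v.im) : ‖f w‖ ≤ ‖f v‖ := by
  rw [show w = v + (w.re - v.re : ℝ) from Complex.ext (by simp) (by simp [him]),
    hα.stripExtension_add_ofReal hf _ hv]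
  exact hα.norm_apply_le _ _

lemma norm_stripExtension_le_max (hα : IsOneParamRep α)
    (hf : IsStripExtension z (fun t => α t a) f) {w : ℂ} (hw : w ∈ hStrip z) :
    ‖f w‖ ≤ max ‖a‖ ‖f z‖ := by
  have hf0 : f 0 = a := by
    rw [← ofReal_zero, hf.apply_ofReal, hα.map_zero, ContinuousLinearMap.id_apply]
  obtain ⟨M, hM⟩ : ∃ M, ∀ y ∈ uIcc 0 z.im, ‖f (y * I)‖ ≤ M :=
    isCompact_uIcc.exists_bound_of_continuousOn
      (hf.continuousOn.comp (by fun_prop) fun y hy => by simpa [hStrip] using hy)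
  refine norm_le_on_closedStrip_of_bounded (M := M) hf.diffContOnCl (fun v hv => ?_)
    (fun v hv => ?_) (fun v hv => ?_) hw
  · have hv' : v.im ∈ uIcc 0 z.im := uIoo_subset_uIcc_self hv
    exact (hα.norm_stripExtension_le_of_im_eq hf (by simpa [hStrip] using hv') (by simp)).trans
      (hM v.im hv')
  · rw [← hf0]
    exact (hα.norm_stripExtension_le_of_im_eq hf (by simp [hStrip]) (by simpa using hv)).trans
      (le_max_left _ _)
  · exact (hα.norm_stripExtension_le_of_im_eq hf (self_mem_hStrip z) hv).trans (le_max_right _ _)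

/-- By the three lines bound, convergence in the graph forces uniform convergence of the
extensions on the whole strip. -/
lemma isClosed_graph [CompleteSpace E] (hα : IsOneParamRep α) (z : ℂ) :
    IsClosed {p : E × E | HasContVal α z p.1 p.2} := by
  refine IsSeqClosed.isClosed fun p q hp hq => ?_
  simp only [mem_ofPred_eq, hasContVal_iff_exists_isStripExtension] at hp ⊢
  choose f hf hfz using hp
  have hdist : ∀ m n, ∀ w ∈ hStrip z, dist (f m w) (f n w) ≤ dist (p m) (p n) := by
    intro m n w hw
    have hsub : IsStripExtension z (fun t => α t ((p m).1 - (p n).1)) (f m - f n) := by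
      simpa only [map_sub] using! (hf m).sub (hf n)
    simpa only [Pi.sub_apply, hfz, ← dist_eq_norm, Prod.dist_eq] using
      hα.norm_stripExtension_le_max hsub hw
  have hcauchy : UniformCauchySeqOn f atTop (hStrip z) := by
    rw [Metric.uniformCauchySeqOn_iff]
    intro ε hε
    obtain ⟨N, hN⟩ := Metric.cauchySeq_iff.1 hq.cauchySeq ε hε
    exact ⟨N, fun m hm n hn w hw => (hdist m n w hw).trans_lt (hN m hm n hn)⟩
  have hlim : TendstoUniformlyOn f (fun w => limUnder atTop (f · w)) atTop (hStrip z) :=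
    hcauchy.tendstoUniformlyOn_of_tendsto fun w hw => (hcauchy.cauchySeq hw).tendsto_limUnder
  refine ⟨_, .of_tendstoUniformlyOn hf hlim fun t => ?_, ?_⟩
  · exact ((α t).continuous.tendsto _).comp hq.fst_nhds
  · refine tendsto_nhds_unique (hlim.tendsto_at (self_mem_hStrip z)) ?_
    simpa only [hfz] using hq.snd_nhds

end IsOneParamRep

namespace HasContVal

variable {a b a' b' : E}

lemma zero (α : ℝ → E →L[ℂ] E) (z : ℂ) : HasContVal α z 0 0 :=
  ⟨0, continuousOn_const, differentiableOn_const 0, by simp, rfl⟩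

lemma add (h : HasContVal α z a b) (h' : HasContVal α z a' b') :
    HasContVal α z (a + a') (b + b') := by
  rw [hasContVal_iff_exists_isStripExtension] at *
  obtain ⟨f, hf, rfl⟩ := h
  obtain ⟨g, hg, rfl⟩ := h'
  exact ⟨f + g, by simpa only [map_add] using! hf.add hg, rfl⟩

lemma map_of_commute {T : E →L[ℂ] E} (hT : ∀ t x, T (α t x) = α t (T x))
    (h : HasContVal α z a b) : HasContVal α z (T a) (T b) := by
  rw [hasContVal_iff_exists_isStripExtension] at *
  obtain ⟨f, hf, rfl⟩ := h
  exact ⟨fun w => T (f w), by simpa only [hT] using hf.clm_comp T, rfl⟩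

lemma smul (c : ℂ) (h : HasContVal α z a b) : HasContVal α z (c • a) (c • b) :=
  h.map_of_commute (T := c • ContinuousLinearMap.id ℂ E) (by simp)

lemma rescale {ε : ℝ} (hε : ε ≠ 0) (h : HasContVal α z a b) :
    HasContVal (fun t => α (ε * t)) (z / ε) a b := by
  rw [hasContVal_iff_exists_isStripExtension] at *
  obtain ⟨f, hf, rfl⟩ := h
  exact ⟨_, hf.comp_ofReal_mul hε, by rw [mul_div_cancel₀ _ (ofReal_ne_zero.2 hε)]⟩

end HasContVal

lemma hasContVal_rescale_iff {ε : ℝ} (hε : ε ≠ 0) {a b : E} :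
    HasContVal (fun t => α (ε * t)) (z / ε) a b ↔ HasContVal α z a b := by
  refine ⟨fun h => ?_, .rescale hε⟩
  simpa [hε, mul_inv_cancel_left₀] using h.rescale (inv_ne_zero hε)

/-- The graph of the restriction of `α_z` to `C`; its closure is the graph of the closure of this
restriction. -/
def restrictedGraph (α : ℝ → E →L[ℂ] E) (z : ℂ) (C : Submodule ℂ E) : Submodule ℂ (E × E) where
  carrier := {p : E × E | p.1 ∈ C ∧ HasContVal α z p.1 p.2}
  add_mem' hp hq := ⟨C.add_mem hp.1 hq.1, hp.2.add hq.2⟩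
  zero_mem' := ⟨C.zero_mem, .zero α z⟩
  smul_mem' c _ hp := ⟨C.smul_mem c hp.1, hp.2.smul c⟩

lemma restrictedGraph_rescale {ε : ℝ} (hε : ε ≠ 0) (C : Submodule ℂ E) :
    restrictedGraph (fun t => α (ε * t)) (z / ε) C = restrictedGraph α z C := by
  ext p
  exact and_congr_right fun _ => hasContVal_rescale_iff hε

end Graph

section Smearing

lemma integral_mem_of_isClosed_submodule {X 𝕜 F : Type*} [RCLike 𝕜] [NormedAddCommGroup F]
    [NormedSpace ℝ F] [NormedSpace 𝕜 F] [CompleteSpace F] [MeasurableSpace X] {μ : Measure X}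
    {K : Submodule 𝕜 F} (hK : IsClosed (K : Set F)) {f : X → F} (hf : Integrable f μ)
    (hfK : ∀ t, f t ∈ K) : ∫ t, f t ∂μ ∈ K := by
  have : IsClosed (K : Set F) := hK
  have hcomm := K.mkQL.integral_comp_comm hf
  have hzero : ∀ t, K.mkQL (f t) = 0 := fun t => (Submodule.Quotient.mk_eq_zero K).2 (hfK t)
  simp only [hzero, integral_zero] at hcomm
  exact (Submodule.Quotient.mk_eq_zero K).1 hcomm.symm

variable {E : Type*} [NormedAddCommGroup E] [NormedSpace ℂ E] {α : ℝ → E →L[ℂ] E} {φ : ℝ → ℂ}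

namespace IsOneParamRep

lemma integrable_smul_apply (hα : IsOneParamRep α) (hφ : Integrable φ) (x : E) :
    Integrable fun t => φ t • α t x :=
  hφ.smul_bdd ‖x‖ (hα.strong_cont x).aestronglyMeasurable
    (ae_of_all _ fun t => hα.norm_apply_le t x)

/-- The smeared operator `α(φ) x = ∫ φ t • α_t x`, the extension of `α` to the convolution
algebra `L¹(ℝ)`. -/
def smear (hα : IsOneParamRep α) (hφ : Integrable φ) : E →L[ℂ] E :=
  LinearMap.mkContinuous
    { toFun := fun x => ∫ t, φ t • α t x
      map_add' := fun x y => by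
        simp only [_root_.map_add, smul_add]
        exact integral_add (hα.integrable_smul_apply hφ x) (hα.integrable_smul_apply hφ y)
      map_smul' := fun c x => by
        rw [RingHom.id_apply, ← integral_smul]
        simp only [map_smul, smul_comm c] }
    (∫ t, ‖φ t‖) fun x => by
      rw [← integral_mul_const]
      refine norm_integral_le_of_norm_le (hφ.norm.mul_const ‖x‖) (ae_of_all _ fun t => ?_)
      rw [norm_smul]
      gcongr
      exact hα.norm_apply_le t x

lemma smear_apply (hα : IsOneParamRep α) (hφ : Integrable φ) (x : E) :
    hα.smear hφ x = ∫ t, φ t • α t x := rfl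

lemma smear_comp_sub (hα : IsOneParamRep α) (hφ : Integrable φ) (s : ℝ) (x : E) :
    hα.smear (hφ.comp_sub_right s) x = hα.smear hφ (α s x) := by
  rw [smear_apply, smear_apply, ← integral_add_right_eq_self _ s]
  simp only [add_sub_cancel_right, hα.apply_apply]

lemma smear_mem_of_isClosed [CompleteSpace E] (hα : IsOneParamRep α) (hφ : Integrable φ)
    {K : Submodule ℂ (E × E)} (hK : IsClosed (K : Set (E × E))) {x y : E}
    (hxy : ∀ t, (α t x, α t y) ∈ K) : (hα.smear hφ x, hα.smear hφ y) ∈ K := by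
  have hx := hα.integrable_smul_apply hφ x
  have hy := hα.integrable_smul_apply hφ y
  rw [smear_apply, smear_apply, ← integral_pair hx hy]
  exact integral_mem_of_isClosed_submodule hK (hx.prodMk hy) fun t => K.smul_mem (φ t) (hxy t)

lemma rescale (hα : IsOneParamRep α) (ε : ℝ) : IsOneParamRep fun t => α (ε * t) where
  map_add s t := by rw [mul_add, hα.map_add]
  map_zero := by rw [mul_zero, hα.map_zero]
  norm_le t := hα.norm_le _
  strong_cont a := (hα.strong_cont a).comp (by fun_prop)

lemma tendsto_smear_rescale [CompleteSpace E] (hα : IsOneParamRep α) (hφ : Integrable φ) (x : E) :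
    Tendsto (fun ε => (hα.rescale ε).smear hφ x) (𝓝 0) (𝓝 ((∫ t, φ t) • x)) := by
  rw [← integral_smul_const]
  refine tendsto_integral_filter_of_dominated_convergence (fun t => ‖φ t‖ * ‖x‖)
    (.of_forall fun ε => ((hα.rescale ε).integrable_smul_apply hφ x).aestronglyMeasurable)
    (.of_forall fun ε => ae_of_all _ fun t => ?_) (hφ.norm.mul_const ‖x‖) (ae_of_all _ fun t => ?_)
  · rw [norm_smul]
    gcongr
    exact hα.norm_apply_le _ x
  · have hcont : Continuous fun ε : ℝ => φ t • α (ε * t) x :=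
      ((hα.strong_cont x).comp (by fun_prop : Continuous fun ε : ℝ => ε * t)).const_smul _
    simpa [hα.map_zero] using hcont.tendsto 0

end IsOneParamRep

end Smearing

section Gaussian

/-- The Gaussian of integral one, translated by the complex number `w`. -/
def gaussianKernel (w : ℂ) (t : ℝ) : ℂ := cexp (-Real.pi * (t - w) ^ 2)

lemma continuous_gaussianKernel (w : ℂ) : Continuous (gaussianKernel w) := by
  unfold gaussianKernel
  fun_prop

lemma integrable_gaussianKernel (w : ℂ) : Integrable (gaussianKernel w) := by
  convert integrable_cexp_quadratic (b := Real.pi) (by simpa using Real.pi_pos)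
    (2 * Real.pi * w) (-Real.pi * w ^ 2) using 2 with t
  rw [gaussianKernel]
  ring_nf

lemma integral_gaussianKernel_zero : ∫ t, gaussianKernel 0 t = 1 := by
  have h := integral_gaussian_complex (b := Real.pi) (by simpa using Real.pi_pos)
  rw [div_self (ofReal_ne_zero.2 Real.pi_ne_zero), one_cpow] at h
  simpa only [gaussianKernel, sub_zero] using h

lemma gaussianKernel_ofReal (s : ℝ) : gaussianKernel s = fun t => gaussianKernel 0 (t - s) := by
  ext t
  simp [gaussianKernel]

lemma hasDerivAt_gaussianKernel (w : ℂ) (t : ℝ) :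
    HasDerivAt (gaussianKernel · t) (2 * Real.pi * (t - w) * gaussianKernel w t) w := by
  have h := ((((hasDerivAt_id' w).const_sub (t : ℂ)).fun_pow 2).const_mul (-Real.pi : ℂ)).cexp
  refine h.congr_deriv ?_
  rw [gaussianKernel]
  push_cast
  ring

lemma norm_gaussianKernel_le (w : ℂ) (t : ℝ) :
    ‖gaussianKernel w t‖ ≤ Real.exp (Real.pi * ‖w‖ ^ 2) * Real.exp (-(Real.pi / 2) * t ^ 2) := by
  have hre : (-Real.pi * ((t : ℂ) - w) ^ 2).re = Real.pi * (w.im ^ 2 - (t - w.re) ^ 2) := by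
    simp [pow_two]
    ring
  rw [gaussianKernel, norm_exp, ← Real.exp_add, hre, Complex.sq_norm, normSq_apply]
  gcongr
  nlinarith [mul_nonneg Real.pi_pos.le (sq_nonneg (t - 2 * w.re))]

lemma norm_gaussianKernel_deriv_le {w : ℂ} {R : ℝ} (hw : ‖w‖ ≤ R) (t : ℝ) :
    ‖2 * Real.pi * (t - w) * gaussianKernel w t‖ ≤ 2 * Real.pi * (|t| + R) *
      (Real.exp (Real.pi * R ^ 2) * Real.exp (-(Real.pi / 2) * t ^ 2)) := by
  have hsub : ‖(t : ℂ) - w‖ ≤ |t| + R := by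
    refine (norm_sub_le _ _).trans ?_
    rw [norm_real, Real.norm_eq_abs]
    gcongr
  have hpi : ‖(2 * Real.pi : ℂ)‖ = 2 * Real.pi := by simp [abs_of_pos Real.pi_pos]
  rw [norm_mul, norm_mul, hpi]
  refine mul_le_mul (by gcongr) ((norm_gaussianKernel_le w t).trans (by gcongr)) (norm_nonneg _) ?_
  exact mul_nonneg (by positivity) ((norm_nonneg _).trans hsub)

lemma integrable_gaussianKernel_deriv_bound (R : ℝ) : Integrable fun t : ℝ =>
    2 * Real.pi * (|t| + R) *
      (Real.exp (Real.pi * R ^ 2) * Real.exp (-(Real.pi / 2) * t ^ 2)) := by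
  have hlinear := (integrable_mul_exp_neg_mul_sq Real.pi_div_two_pos).norm
  have hconst := (integrable_exp_neg_mul_sq Real.pi_div_two_pos).const_mul R
  refine ((hlinear.add hconst).const_mul (2 * Real.pi * Real.exp (Real.pi * R ^ 2))).congr
    (ae_of_all _ fun t => ?_)
  simp only [Pi.add_apply, norm_mul, Real.norm_eq_abs, Real.abs_exp]
  ring

variable {E : Type*} [NormedAddCommGroup E] [NormedSpace ℂ E]

lemma differentiable_integral_gaussianKernel_smul {u : ℝ → E} (hu : AEStronglyMeasurable u)
    {M : ℝ} (hM : ∀ t, ‖u t‖ ≤ M) : Differentiable ℂ fun w => ∫ t, gaussianKernel w t • u t := by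
  intro w₀
  set R := ‖w₀‖ + 1
  have hint : ∀ w, Integrable fun t => gaussianKernel w t • u t := fun w =>
    (integrable_gaussianKernel w).smul_bdd M hu (ae_of_all _ hM)
  refine (hasDerivAt_integral_of_dominated_loc_of_deriv_le (𝕜 := ℂ)
    (F := fun w t => gaussianKernel w t • u t)
    (F' := fun w t => (2 * Real.pi * (t - w) * gaussianKernel w t) • u t)
    (Metric.ball_mem_nhds w₀ one_pos)
    (.of_forall fun w => (hint w).aestronglyMeasurable) (hint w₀) ?_ (ae_of_all _ fun t w hw => ?_)
    ((integrable_gaussianKernel_deriv_bound R).mul_const M)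
    (ae_of_all _ fun t w _ => (hasDerivAt_gaussianKernel w t).smul_const (u t))).2.differentiableAt
  · have hcont := continuous_gaussianKernel w₀
    exact (Continuous.aestronglyMeasurable (by fun_prop)).smul hu
  · have hw : ‖w‖ ≤ R := by
      have := norm_le_norm_add_norm_sub' w w₀
      rw [mem_ball_iff_norm] at hw
      simp only [R]
      linarith
    rw [norm_smul]
    exact mul_le_mul (norm_gaussianKernel_deriv_le hw t) (hM t) (norm_nonneg _) (by positivity)

variable {α : ℝ → E →L[ℂ] E} {z : ℂ} {a b : E}

/-- Both `w ↦ S_0 (f w)`, where `f` extends the orbit of `a`, and `w ↦ S_w a` extend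
`t ↦ S_0 (α_t a)`. -/
lemma HasContVal.smear_gaussianKernel (hα : IsOneParamRep α) (h : HasContVal α z a b) :
    hα.smear (integrable_gaussianKernel 0) b = hα.smear (integrable_gaussianKernel z) a := by
  obtain ⟨f, hf, rfl⟩ := hasContVal_iff_exists_isStripExtension.1 h
  have hentire : Differentiable ℂ fun w => hα.smear (integrable_gaussianKernel w) a :=
    differentiable_integral_gaussianKernel_smul (hα.strong_cont a).aestronglyMeasurable
      fun t => hα.norm_apply_le t a
  have hreal : ∀ t : ℝ, hα.smear (integrable_gaussianKernel t) a =
      hα.smear (integrable_gaussianKernel 0) (α t a) := by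
    intro t
    rw [← hα.smear_comp_sub]
    simp only [gaussianKernel_ofReal]
  have hext := IsStripExtension.of_differentiable (z := z) hentire
  simp only [hreal] at hext
  exact (hf.clm_comp (hα.smear (integrable_gaussianKernel 0))).eqOn hext (self_mem_hStrip z)

namespace IsOneParamRep

variable [CompleteSpace E] {C : Submodule ℂ E}

lemma smear_gaussianKernel_mem_topologicalClosure (hα : IsOneParamRep α)
    (hCdom : ∀ x ∈ C, ∃ b, HasContVal α z x b) (hCdense : Dense (C : Set E))
    (hCinv : ∀ t : ℝ, ∀ x ∈ C, α t x ∈ C) (x : E) :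
    (hα.smear (integrable_gaussianKernel 0) x, hα.smear (integrable_gaussianKernel z) x) ∈
      (restrictedGraph α z C).topologicalClosure := by
  have hclosed := (restrictedGraph α z C).isClosed_topologicalClosure
  refine hCdense.induction (P := fun x => (hα.smear (integrable_gaussianKernel 0) x,
    hα.smear (integrable_gaussianKernel z) x) ∈ (restrictedGraph α z C).topologicalClosure)
    (fun x hx => ?_) (hclosed.preimage (by fun_prop)) x
  obtain ⟨y, hxy⟩ := hCdom x hx
  rw [← hxy.smear_gaussianKernel hα]
  exact hα.smear_mem_of_isClosed _ hclosed fun t => Submodule.le_topologicalClosure _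
    ⟨hCinv t x hx, hxy.map_of_commute (hα.apply_comm t)⟩

lemma smear_rescale_mem_topologicalClosure (hα : IsOneParamRep α)
    (hCdom : ∀ x ∈ C, ∃ b, HasContVal α z x b) (hCdense : Dense (C : Set E))
    (hCinv : ∀ t : ℝ, ∀ x ∈ C, α t x ∈ C) (h : HasContVal α z a b) {ε : ℝ} (hε : ε ≠ 0) :
    ((hα.rescale ε).smear (integrable_gaussianKernel 0) a,
      (hα.rescale ε).smear (integrable_gaussianKernel 0) b) ∈
        (restrictedGraph α z C).topologicalClosure := by
  rw [(h.rescale hε).smear_gaussianKernel (hα.rescale ε), ← restrictedGraph_rescale hε]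
  exact (hα.rescale ε).smear_gaussianKernel_mem_topologicalClosure
    (fun x hx => (hCdom x hx).imp fun _ hy => hy.rescale hε) hCdense (fun t => hCinv (ε * t)) a

end IsOneParamRep

end Gaussian

/-- If `C` is a dense subspace of `E` contained in `D(α_z)` and invariant under every `α_t`,
then `C` is a core for `α_z`. -/
theorem invariant_core
    {E : Type*} [NormedAddCommGroup E] [NormedSpace ℂ E] [CompleteSpace E]
    {α : ℝ → E →L[ℂ] E} (hα : IsOneParamRep α) (z : ℂ) (C : Submodule ℂ E)
    (hCdom : ∀ x ∈ C, ∃ b, HasContVal α z x b)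
    (hCdense : Dense (C : Set E))
    (hCinv : ∀ t : ℝ, ∀ x ∈ C, α t x ∈ C) :
    closure {p : E × E | p.1 ∈ C ∧ HasContVal α z p.1 p.2}
      = {p : E × E | HasContVal α z p.1 p.2} := by
  refine (closure_minimal (fun p hp => hp.2) (hα.isClosed_graph z)).antisymm ?_
  rintro ⟨a, b⟩ hab
  have hsmear : ∀ x : E, Tendsto (fun ε => (hα.rescale ε).smear (integrable_gaussianKernel 0) x)
      (𝓝[≠] 0) (𝓝 x) := fun x => by
    simpa only [integral_gaussianKernel_zero, one_smul] using
      (hα.tendsto_smear_rescale (integrable_gaussianKernel 0) x).mono_left nhdsWithin_le_nhds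
  refine isClosed_closure.mem_of_tendsto ((hsmear a).prodMk_nhds (hsmear b)) ?_
  filter_upwards [self_mem_nhdsWithin] with ε hε
  exact hα.smear_rescale_mem_topologicalClosure hCdom hCdense hCinv hab hε
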